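/- arXiv:2106.03676 — 4 statements merged into one kernel-verified Lean document; each statement's English description precedes it below -/
import Mathlib

section
/- Let k be a field, n and D positive integers, and A an n-by-D family of vectors a_1, ..., a_n in ℕ^D. Let φ : k[x_1, ..., x_n] → k[t_1, ..., t_D] be the k-algebra homomorphism determined by φ(x_i) = t^{a_i}. Then the kernel of φ, i.e. the toric ideal I_A, is spanned as a k-vector space by the set of binomials { x^u − x^v : u, v ∈ ℕ^n with Σ_i u_i a_i = Σ_i v_i a_i }. -/
open MvPolynomial

theorem aux_prod_monomial (k : Type*) [Field k] (n : ℕ) (u : Fin n →₀ ℕ) :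
    (∏ i, (X i : MvPolynomial (Fin n) k) ^ u i) = monomial u 1 := by
  rw [monomial_eq, Finsupp.prod_fintype _ _ (by simp)]
  simp

/-- The toric ideal `I_A = ker φ` is spanned as a `k`-vector space by the binomials
`x^u - x^v` with `∑ i, u i • A i = ∑ i, v i • A i`. -/
theorem ker_monomialMap_eq_span_binomials
    (k : Type*) [Field k] (n D : ℕ) (hn : 0 < n) (hD : 0 < D)
    (A : Fin n → Fin D → ℕ)
    (φ : MvPolynomial (Fin n) k →ₐ[k] MvPolynomial (Fin D) k)
    (hφ : ∀ i, φ (X i) = ∏ j, X j ^ A i j) :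
    Submodule.span k
        {p : MvPolynomial (Fin n) k |
          ∃ u v : Fin n → ℕ,
            (∀ j, ∑ i, u i * A i j = ∑ i, v i * A i j) ∧
            p = (∏ i, X i ^ u i) - ∏ i, X i ^ v i} =
      Submodule.restrictScalars k (RingHom.ker φ) := by
  have hprod : ∀ u : Fin n → ℕ, φ (∏ i, X i ^ u i) = ∏ j, X j ^ (∑ i, u i * A i j) := by
    intro u
    simp only [map_prod, map_pow, hφ, ← Finset.prod_pow, ← pow_mul]
    rw [Finset.prod_comm]
    refine Finset.prod_congr rfl fun j _ => ?_
    rw [Finset.prod_pow_eq_pow_sum]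
    simp only [mul_comm]
  apply le_antisymm
  · rw [Submodule.span_le]
    rintro p ⟨u, v, h, rfl⟩
    simp only [Submodule.coe_restrictScalars, SetLike.mem_coe, RingHom.mem_ker]
    rw [map_sub, hprod, hprod, sub_eq_zero]
    simp only [h]
  · intro p hp
    have hp0 : φ p = 0 := by simpa [RingHom.mem_ker] using hp
    let w : (Fin n →₀ ℕ) → (Fin D →₀ ℕ) := fun u =>
      Finsupp.equivFunOnFinite.symm fun j => ∑ i, u i * A i j
    have hw : ∀ u, φ (monomial u 1) = monomial (w u) 1 := by
      intro u
      rw [← aux_prod_monomial, hprod, ← aux_prod_monomial]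
      rfl
    let ψ : MvPolynomial (Fin D) k →ₗ[k] MvPolynomial (Fin n) k :=
      (basisMonomials (Fin D) k).constr k (fun b => monomial (Function.invFun w b) (1 : k))
    have hψ : ∀ b, ψ (monomial b 1) = monomial (Function.invFun w b) 1 := by
      intro b
      have := (basisMonomials (Fin D) k).constr_basis k
        (fun b => monomial (Function.invFun w b) (1 : k)) b
      simpa [ψ] using this
    have key : ∀ q : MvPolynomial (Fin n) k, q - ψ (φ q) ∈ Submodule.span k
        {p : MvPolynomial (Fin n) k |
          ∃ u v : Fin n → ℕ,
            (∀ j, ∑ i, u i * A i j = ∑ i, v i * A i j) ∧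
            p = (∏ i, X i ^ u i) - ∏ i, X i ^ v i} := by
      intro q
      induction q using MvPolynomial.induction_on' with
      | monomial u a =>
        have e : monomial u a = a • (monomial u (1 : k)) := by simp [smul_monomial]
        rw [e, map_smul, map_smul, ← smul_sub, hw, hψ]
        refine Submodule.smul_mem _ _ (Submodule.subset_span
          ⟨u, (Function.invFun w (w u) : Fin n →₀ ℕ), ?_, ?_⟩)
        · intro j
          have : w (Function.invFun w (w u)) = w u := Function.invFun_eq ⟨u, rfl⟩
          exact (DFunLike.congr_fun this j).symm
        · rw [aux_prod_monomial, aux_prod_monomial]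
      | add p q h1 h2 =>
        rw [map_add, map_add, add_sub_add_comm]
        exact Submodule.add_mem _ h1 h2
    have := key p
    rwa [hp0, map_zero, sub_zero] at this
end

section
/- Let k be a field, n and D positive integers, and A an n-by-D family of vectors a_1, ..., a_n in ℕ^D. Let φ : k[x_1, ..., x_n] → k[t_1, ..., t_D] be the k-algebra homomorphism determined by φ(x_i) = t^{a_i}. Then the kernel of φ, i.e. the toric ideal I_A, equals the ideal of k[x_1, ..., x_n] generated by the set of binomials { x^u − x^v : u, v ∈ ℕ^n with Σ_i u_i a_i = Σ_i v_i a_i }. -/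
open MvPolynomial

/-- The toric ideal `I_A = ker φ` equals the ideal generated by the binomials
`x^u - x^v` with `∑ i, u i • A i = ∑ i, v i • A i`. -/
theorem ker_monomialMap_eq_ideal_span_binomials
    (k : Type*) [Field k] (n D : ℕ) (hn : 0 < n) (hD : 0 < D)
    (A : Fin n → Fin D → ℕ)
    (φ : MvPolynomial (Fin n) k →ₐ[k] MvPolynomial (Fin D) k)
    (hφ : ∀ i, φ (X i) = ∏ j, X j ^ A i j) :
    RingHom.ker φ =
      Ideal.span
        {p : MvPolynomial (Fin n) k |
          ∃ u v : Fin n → ℕ,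
            (∀ j, ∑ i, u i * A i j = ∑ i, v i * A i j) ∧
            p = (∏ i, X i ^ u i) - ∏ i, X i ^ v i} := by
  have hmon : ∀ (m : ℕ) (u : Fin m →₀ ℕ),
      (monomial u (1 : k) : MvPolynomial (Fin m) k) = ∏ i, X i ^ u i := by
    intro m u
    rw [monomial_eq, Finsupp.prod_fintype _ _ (by simp)]
    simp
  have hprod : ∀ u : Fin n → ℕ, φ (∏ i, X i ^ u i) = ∏ j, X j ^ (∑ i, u i * A i j) := by
    intro u
    simp only [map_prod, map_pow, hφ, ← Finset.prod_pow, ← pow_mul]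
    rw [Finset.prod_comm]
    refine Finset.prod_congr rfl fun j _ => ?_
    rw [Finset.prod_pow_eq_pow_sum]
    simp only [mul_comm]
  apply le_antisymm
  · intro p hp
    rw [RingHom.mem_ker] at hp
    let d : (Fin n →₀ ℕ) → (Fin D →₀ ℕ) := fun u =>
      Finsupp.equivFunOnFinite.symm fun j => ∑ i, u i * A i j
    have hd : ∀ u, φ (monomial u 1) = monomial (d u) 1 := by
      intro u
      rw [hmon, hprod, hmon]
      rfl
    let s := Function.invFun d
    have hs : ∀ u, d (s (d u)) = d u := fun u => Function.invFun_eq ⟨u, rfl⟩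
    let σ : MvPolynomial (Fin D) k →ₗ[k] MvPolynomial (Fin n) k :=
      (basisMonomials (Fin D) k).constr k (fun m => monomial (s m) (1 : k))
    have hσ : ∀ m, σ (monomial m 1) = monomial (s m) 1 := by
      intro m
      have := (basisMonomials (Fin D) k).constr_basis k (fun m => monomial (s m) (1 : k)) m
      rwa [coe_basisMonomials] at this
    have key : ∀ q : MvPolynomial (Fin n) k, q - σ (φ q) ∈ Ideal.span
        {p : MvPolynomial (Fin n) k |
          ∃ u v : Fin n → ℕ,
            (∀ j, ∑ i, u i * A i j = ∑ i, v i * A i j) ∧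
            p = (∏ i, X i ^ u i) - ∏ i, X i ^ v i} := by
      intro q
      induction q using MvPolynomial.induction_on' with
      | monomial u a =>
        have h1 : (monomial u a : MvPolynomial (Fin n) k) = a • monomial u 1 := by
          rw [smul_monomial, smul_eq_mul, mul_one]
        rw [h1, map_smul, map_smul, hd, hσ, ← smul_sub, smul_eq_C_mul]
        refine Ideal.mul_mem_left _ _ (Ideal.subset_span ⟨u, s (d u), ?_, ?_⟩)
        · intro j
          exact (DFunLike.congr_fun (hs u) j).symm
        · rw [hmon, hmon]
      | add p q hp hq =>
        rw [map_add, map_add, add_sub_add_comm]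
        exact Ideal.add_mem _ hp hq
    have := key p
    rwa [hp, map_zero, sub_zero] at this
  · rw [Ideal.span_le]
    rintro _ ⟨u, v, h, rfl⟩
    rw [SetLike.mem_coe, RingHom.mem_ker, map_sub, hprod, hprod]
    simp only [h, sub_self]
end

section
/- Let k be a field, n and D positive integers, and a_1, ..., a_n vectors in ℕ^D. Then the family of monomials t^{a_1}, ..., t^{a_n} in k[t_1, ..., t_D] is algebraically independent over k if and only if the family of vectors a_1, ..., a_n is linearly independent over ℚ (equivalently, the integer matrix A with columns a_1, ..., a_n has rank n). -/
open MvPolynomial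

theorem aux_phi_inj_iff (n D : ℕ) (a : Fin n → Fin D → ℕ) :
    (∀ m m' : Fin n → ℕ, (∀ j, ∑ i, m i * a i j = ∑ i, m' i * a i j) → m = m') ↔
      LinearIndependent ℚ (fun i : Fin n => fun j : Fin D => (a i j : ℚ)) := by
  rw [← LinearIndependent.iff_fractionRing ℤ ℚ, Fintype.linearIndependent_iff]
  constructor
  · intro h g hg i
    have h1 := h (fun i => (g i).toNat) (fun i => (-g i).toNat) (by
      intro j
      have h2 := congrFun hg j
      simp only [Finset.sum_apply, Pi.smul_apply, Pi.zero_apply] at h2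
      simp only [zsmul_eq_mul] at h2
      have h3 : ∑ i, g i * (a i j : ℤ) = 0 := by exact_mod_cast h2
      zify
      rw [← sub_eq_zero, ← Finset.sum_sub_distrib, ← h3]
      refine Finset.sum_congr rfl fun i _ => ?_
      rw [← sub_mul]
      congr 1
      omega)
    have h4 := congrFun h1 i
    omega
  · intro h m m' hm
    funext i
    have := h (fun i => (m i : ℤ) - m' i) (by
      funext j
      simp only [Finset.sum_apply, Pi.smul_apply, Pi.zero_apply]
      simp only [zsmul_eq_mul]
      have h3 : ∑ i, (m i : ℚ) * a i j = ∑ i, (m' i : ℚ) * a i j := by exact_mod_cast hm j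
      push_cast
      simp only [sub_mul, Finset.sum_sub_distrib, h3, sub_self]) i
    omega

theorem aux_aeval (k : Type*) [Field k] (n D : ℕ) (a : Fin n → Fin D → ℕ)
    (m : Fin n →₀ ℕ) (c : k) :
    aeval (fun i : Fin n => ∏ j, (X j : MvPolynomial (Fin D) k) ^ a i j) (monomial m c) =
      monomial (Finsupp.equivFunOnFinite.symm fun j => ∑ i, m i * a i j) c := by
  rw [aeval_monomial, monomial_eq (a := c), Finsupp.prod_fintype _ _ (by simp),
    Finsupp.prod_fintype _ _ (by simp), algebraMap_eq]
  congr 1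
  simp only [← Finset.prod_pow, ← pow_mul, Finsupp.equivFunOnFinite_symm_apply_apply]
  rw [Finset.prod_comm]
  refine Finset.prod_congr rfl fun j _ => ?_
  rw [Finset.prod_pow_eq_pow_sum]
  simp only [mul_comm]

/-- The monomials `t ^ (a 1), ..., t ^ (a n)` are algebraically independent over `k`
iff the exponent vectors `a 1, ..., a n` are linearly independent over `ℚ`. -/
theorem algebraicIndependent_monomials_iff_linearIndependent
    (k : Type*) [Field k] (n D : ℕ) (hn : 0 < n) (hD : 0 < D)
    (a : Fin n → Fin D → ℕ) :
    AlgebraicIndependent k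
        (fun i : Fin n => ∏ j, (X j : MvPolynomial (Fin D) k) ^ a i j) ↔
      LinearIndependent ℚ (fun i : Fin n => fun j : Fin D => (a i j : ℚ)) := by
  rw [← aux_phi_inj_iff]
  constructor
  · intro h m m' hm
    have h1 := (algebraicIndependent_iff_injective_aeval.1 h)
      (a₁ := monomial (Finsupp.equivFunOnFinite.symm m) 1)
      (a₂ := monomial (Finsupp.equivFunOnFinite.symm m') 1) (by
        rw [aux_aeval, aux_aeval]
        congr 2
        refine congrArg _ ?_
        funext j
        exact hm j)
    exact Finsupp.equivFunOnFinite.symm.injective (monomial_left_injective one_ne_zero h1)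
  · intro h
    rw [algebraicIndependent_iff]
    intro p hp
    ext m
    rw [coeff_zero]
    by_contra hm
    rw [p.as_sum, map_sum] at hp
    simp only [aux_aeval] at hp
    have h2 := congrArg
      (coeff (Finsupp.equivFunOnFinite.symm fun j => ∑ i, m i * a i j)) hp
    rw [coeff_sum, Finset.sum_eq_single m, coeff_monomial, if_pos rfl, coeff_zero] at h2
    · exact hm h2
    · intro b _ hb
      rw [coeff_monomial, if_neg]
      intro he
      apply hb
      exact DFunLike.coe_injective
        (h _ _ fun j => congrFun (Finsupp.equivFunOnFinite.symm.injective he) j)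
    · intro hs
      exact absurd (mem_support_iff.2 hm) hs
end

section
/- Let k be a field, n and D positive integers, and A an integer matrix with columns a_1, ..., a_n ∈ ℕ^D of rank d (over ℚ). Let φ : k[x_1, ..., x_n] → k[t_1, ..., t_D] be the k-algebra homomorphism determined by φ(x_i) = t^{a_i}, and let I_A = ker φ be the toric ideal of A. Then the Krull dimension of the quotient ring k[x_1, ..., x_n]/I_A equals d, the rank of A. -/
open MvPolynomial

theorem toricAux_krull {R S : Type*} [CommRing R] [CommRing S] [Algebra R S]
    [Algebra.IsIntegral R S] [FaithfulSMul R S] : ringKrullDim S = ringKrullDim R := by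
  apply le_antisymm
  · refine Order.krullDim_le_of_strictMono (PrimeSpectrum.comap (algebraMap R S)) ?_
    intro I J h
    exact Ideal.IsIntegral.comap_lt_comap (R := R) (I := I.asIdeal) (J := J.asIdeal) h
  · refine iSup_le fun l => ?_
    obtain ⟨P, hP⟩ := Algebra.IsIntegral.comap_surjective R S l.head
    have : P.asIdeal.LiesOver (RelSeries.head l).asIdeal := ⟨by rw [← hP]; rfl⟩
    obtain ⟨L, hL, -⟩ := Ideal.exists_ltSeries_of_hasGoingUp (S := S) l P.asIdeal
    rw [← hL]
    exact Order.LTSeries.length_le_krullDim L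

theorem toricAux_lin {σ : Type*} [Fintype σ] {D : ℕ} (B : σ → Fin D → ℕ) :
    LinearIndependent ℚ (fun i j => (B i j : ℚ)) ↔
      Function.Injective (fun u : σ →₀ ℕ => ∑ i, u i • Finsupp.equivFunOnFinite.symm (B i)) := by
  have key : ∀ u v : σ →₀ ℕ, (∑ i, u i • Finsupp.equivFunOnFinite.symm (B i) =
      ∑ i, v i • Finsupp.equivFunOnFinite.symm (B i)) ↔
      ∑ i, ((u i : ℤ) - v i) • (fun j => (B i j : ℚ)) = 0 := by
    intro u v
    rw [DFunLike.ext_iff, funext_iff]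
    refine forall_congr' fun j => ?_
    simp only [Finsupp.finsetSum_apply, Finset.sum_apply, sub_smul, Pi.sub_apply, Finset.sum_sub_distrib,
      Finsupp.smul_apply, Pi.smul_apply, Pi.zero_apply, sub_eq_zero]
    rw [← Nat.cast_inj (R := ℚ)]
    simp
  rw [← LinearIndependent.iff_fractionRing ℤ ℚ, Fintype.linearIndependent_iff]
  constructor
  · intro h u v huv
    ext i
    have := h _ ((key u v).1 huv) i
    omega
  · intro h g hg i
    have := @h (Finsupp.equivFunOnFinite.symm fun i => (g i).toNat)
      (Finsupp.equivFunOnFinite.symm fun i => (-g i).toNat) ((key _ _).2 (by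
        simpa [Int.toNat_sub_toNat_neg] using hg))
    have := DFunLike.congr_fun this i
    simp at this
    omega

theorem toricAux_indep (k : Type*) [Field k] {σ : Type*} [Fintype σ] {D : ℕ}
    (B : σ → Fin D → ℕ) :
    AlgebraicIndependent k (fun i => ∏ j, (X j : MvPolynomial (Fin D) k) ^ B i j) ↔
      LinearIndependent ℚ (fun i j => (B i j : ℚ)) := by
  classical
  rw [toricAux_lin, algebraicIndependent_iff_injective_aeval]
  set L := (fun u : σ →₀ ℕ => ∑ i, u i • Finsupp.equivFunOnFinite.symm (B i)) with hL
  have hX : ∀ i, ∏ j, (X j : MvPolynomial (Fin D) k) ^ B i j =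
      monomial (Finsupp.equivFunOnFinite.symm (B i)) 1 := by
    intro i
    rw [monomial_eq, Finsupp.prod_fintype _ _ (by simp)]
    simp
  have hm : ∀ u c, aeval (fun i => ∏ j, (X j : MvPolynomial (Fin D) k) ^ B i j) (monomial u c)
      = monomial (L u) c := by
    intro u c
    rw [aeval_monomial, Finsupp.prod_fintype _ _ (by simp)]
    simp only [hX, monomial_pow, one_pow, hL]
    rw [← monomial_sum_one, algebraMap_eq, C_mul_monomial, mul_one]
  constructor
  · intro h u v huv
    have := @h (monomial u 1) (monomial v 1) (by rw [hm, hm, show L u = L v from huv])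
    exact monomial_left_injective one_ne_zero this
  · intro h
    rw [injective_iff_map_eq_zero]
    intro f hf
    ext u
    have h2 : coeff (L u) (aeval (fun i => ∏ j, (X j : MvPolynomial (Fin D) k) ^ B i j) f)
        = coeff u f := by
      conv_lhs => rw [f.as_sum, map_sum]
      simp only [hm, coeff_sum, coeff_monomial, h.eq_iff]
      simp +contextual [eq_comm]
    rw [← h2, hf, coeff_zero, coeff_zero]

/-- The Krull dimension of the coordinate ring `k[x]/I_A` of the toric ideal `I_A = ker φ`
equals the rank `d` of the defining matrix `A` over `ℚ`. -/
theorem ringKrullDim_quotient_toricIdeal_eq_rank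
    (k : Type*) [Field k] (n D : ℕ) (hn : 0 < n) (hD : 0 < D)
    (A : Fin n → Fin D → ℕ) (d : ℕ)
    (hd : (Matrix.of fun j i => (A i j : ℚ) : Matrix (Fin D) (Fin n) ℚ).rank = d)
    (φ : MvPolynomial (Fin n) k →ₐ[k] MvPolynomial (Fin D) k)
    (hφ : ∀ i, φ (X i) = ∏ j, X j ^ A i j) :
    ringKrullDim (MvPolynomial (Fin n) k ⧸ RingHom.ker φ) = d := by
  classical
  have hprime : (RingHom.ker φ).IsPrime := RingHom.ker_isPrime φ
  set Q := MvPolynomial (Fin n) k ⧸ RingHom.ker φ with hQ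
  -- Noether normalization
  obtain ⟨s, g, ginj, gint⟩ := exists_integral_inj_algHom_of_fg k Q
  have hdim : ringKrullDim Q = s ∧ Algebra.trdeg k Q = s := by
    algebraize [g.toRingHom]
    have : Algebra.IsIntegral (MvPolynomial (Fin s) k) Q := ⟨gint⟩
    have : FaithfulSMul (MvPolynomial (Fin s) k) Q :=
      (faithfulSMul_iff_algebraMap_injective _ _).mpr ginj
    constructor
    · rw [toricAux_krull (R := MvPolynomial (Fin s) k), MvPolynomial.ringKrullDim_of_isNoetherianRing]
      simp
    · have h := lift_trdeg_add_eq k (MvPolynomial (Fin s) k) Q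
      have h0 : Algebra.trdeg (MvPolynomial (Fin s) k) Q = 0 :=
        trdeg_eq_zero
      simpa [h0] using h.symm
  rw [hdim.1]
  have hs := hdim.2
  -- the embedding into k[t]
  let ψ : Q →ₐ[k] MvPolynomial (Fin D) k := Ideal.kerLiftAlg φ
  have hψ : Function.Injective ψ := Ideal.kerLiftAlg_injective φ
  let y : Fin n → Q := fun i => Ideal.Quotient.mkₐ k _ (X i)
  have hy : ∀ i, ψ (y i) = ∏ j, X j ^ A i j := fun i => by
    rw [← hφ]; rfl
  have hind : ∀ {σ : Type} [Fintype σ] (e : σ → Fin n), AlgebraicIndependent k (y ∘ e) ↔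
      LinearIndependent ℚ (fun i j => (A (e i) j : ℚ)) := by
    intro σ _ e
    rw [← toricAux_indep k, ← ψ.algebraicIndependent_iff hψ]
    simp only [Function.comp_def, hy]
  have hcol : Module.finrank ℚ (Submodule.span ℚ (Set.range fun i j => (A i j : ℚ))) = d := by
    rw [← hd, Matrix.rank_eq_finrank_span_cols]; rfl
  have hadj : Algebra.adjoin k (Set.range y) = ⊤ := by
    have : Set.range y = (Ideal.Quotient.mkₐ k (RingHom.ker φ)) '' Set.range X := by
      rw [← Set.range_comp]; rfl
    rw [this, Algebra.adjoin_image, adjoin_range_X, Algebra.map_top, AlgHom.range_eq_top]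
    exact Ideal.Quotient.mkₐ_surjective k _
  norm_cast
  apply le_antisymm
  · have : Algebra.IsAlgebraic (Algebra.adjoin k (Set.range y)) Q := by
      rw [hadj]
      exact ⟨fun x => isAlgebraic_algebraMap (⟨x, trivial⟩ : (⊤ : Subalgebra k Q))⟩
    obtain ⟨t, ht, hb⟩ := exists_isTranscendenceBasis_subset (R := k) (Set.range y)
    choose e he using ht
    let e' : t → Fin n := fun x => e x.2
    have hye : y ∘ e' = ((↑) : t → Q) := funext fun x => he x.2
    have e'inj : Function.Injective e' := fun a b h => by
      apply Subtype.ext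
      rw [← hye]; simp [h]
    let E : Set (Fin n) := Set.range e'
    let q := Equiv.ofInjective e' e'inj
    have hi : AlgebraicIndependent k (y ∘ ((↑) : E → Fin n)) := by
      have h1 : y ∘ ((↑) : E → Fin n) = ((↑) : t → Q) ∘ q.symm := by
        rw [← hye]; funext x
        simp [q, Function.comp, Equiv.apply_ofInjective_symm]
      rw [h1]; exact hb.1.comp _ q.symm.injective
    have hl := (hind _).1 hi
    have hc : Fintype.card E = s := by
      have h1 := hb.cardinalMk_eq_trdeg
      rw [hs] at h1
      have := Nat.card_congr q
      rw [Nat.card, h1] at this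
      rw [← Nat.card_eq_fintype_card, ← this, Cardinal.toNat_natCast]
    rw [← hc, ← hcol, ← finrank_span_eq_card hl]
    apply Submodule.finrank_mono
    apply Submodule.span_mono
    rintro _ ⟨i, rfl⟩
    exact ⟨i, rfl⟩
  · obtain ⟨κ, a, ainj, hsp, hli⟩ := exists_linearIndependent' ℚ (fun i j => (A i j : ℚ) : Fin n → Fin D → ℚ)
    have : Fintype κ := Fintype.ofInjective a ainj
    have h1 := ((hind a).2 hli).lift_cardinalMk_le_trdeg
    rw [hs] at h1
    rw [← hcol, ← hsp, finrank_span_eq_card hli]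
    simpa using h1
end
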